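/- Let F be a field, A and B finite-dimensional associative unital F-algebras, and φ : A → B a surjective F-algebra homomorphism. If every generating set of B has length at most L, then every generating set of A has length at most L + dim_F A − dim_F B; i.e., l(A) ≤ l(B) + dim_F A − dim_F B. -/

import Mathlib

/-!
Write `V = span ({1} ∪ S)`, so that `Lk F S k = V ^ k`. The chain `V ^ 0 ≤ V ^ 1 ≤ ⋯` is
increasing, and once two consecutive terms agree it is constant; since `S` generates `A`, the
constant value is then `⊤`. So the dimension grows by at least one at each step until it reaches
`dim A` (`min_finrank_le_finrank_Lk`).

The image `φ '' S` generates `B`, so `φ` maps `V ^ L` onto `B` and `dim V ^ L ≥ dim B`. After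
`dim A - dim B` further steps the chain has therefore reached `A`.
-/

/-- `Lk F S k` is the `F`-linear span of all products of at most `k` elements of `S`
(the empty product `1` has length `0`); equivalently `V ^ k` with `V = span F ({1} ∪ S)`. -/
noncomputable def Lk (F : Type*) [Field F] {A : Type*} [Ring A] [Algebra F A]
    (S : Set A) (k : ℕ) : Submodule F A :=
  (Submodule.span F ({1} ∪ S)) ^ k

/-- The length of a generating set `S`: the least `k` with `Lk F S k = ⊤`. -/
noncomputable def lenS (F : Type*) [Field F] {A : Type*} [Ring A] [Algebra F A]
    (S : Set A) : ℕ :=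
  sInf {k | Lk F S k = ⊤}

/-- `mAlg F A` is the maximal degree over all `τ ∈ A` of the minimal polynomial of `τ`. -/
noncomputable def mAlg (F A : Type*) [Field F] [Ring A] [Algebra F A] : ℕ :=
  sSup {d | ∃ τ : A, d = (minpoly F τ).natDegree}

section Length

variable {F A B : Type*} [Field F] [Ring A] [Algebra F A] [Ring B] [Algebra F B]

lemma one_le_span_insert_one (S : Set A) : 1 ≤ Submodule.span F ({1} ∪ S) := by
  rw [Submodule.one_le]
  exact Submodule.subset_span (Or.inl rfl)

lemma Lk_mono (S : Set A) : Monotone (Lk F S) :=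
  fun _ _ h => pow_le_pow_right₀ (one_le_span_insert_one S) h

lemma exists_mem_Lk (S : Set A) (hS : Algebra.adjoin F S = ⊤) (x : A) :
    ∃ n, x ∈ Lk F S n := by
  have hx : x ∈ Algebra.adjoin F S := hS ▸ Algebra.mem_top
  induction hx using Algebra.adjoin_induction with
  | mem x hx =>
    refine ⟨1, ?_⟩
    rw [Lk, pow_one]
    exact Submodule.subset_span (Or.inr hx)
  | algebraMap r =>
    refine ⟨0, ?_⟩
    rw [Lk, pow_zero]
    exact Submodule.algebraMap_mem r
  | add x y _ _ hx hy =>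
    obtain ⟨m, hm⟩ := hx
    obtain ⟨n, hn⟩ := hy
    exact ⟨max m n, add_mem (Lk_mono S (le_max_left m n) hm) (Lk_mono S (le_max_right m n) hn)⟩
  | mul x y _ _ hx hy =>
    obtain ⟨m, hm⟩ := hx
    obtain ⟨n, hn⟩ := hy
    refine ⟨m + n, ?_⟩
    rw [Lk, pow_add]
    exact Submodule.mul_mem_mul hm hn

lemma Lk_eq_top_of_eq_succ (S : Set A) (hS : Algebra.adjoin F S = ⊤) (k : ℕ)
    (h : Lk F S k = Lk F S (k + 1)) : Lk F S k = ⊤ := by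
  have hstab : ∀ j, Lk F S (k + j) = Lk F S k := by
    intro j
    induction j with
    | zero => rfl
    | succ j ih =>
      have h1 : Lk F S (k + (j + 1)) = Lk F S (k + j) * Lk F S 1 := by
        simp only [Lk]
        rw [← pow_add, add_assoc]
      rw [h1, ih]
      simp only [Lk] at h ⊢
      rw [← pow_add]
      exact h.symm
  rw [eq_top_iff]
  intro x _
  obtain ⟨n, hn⟩ := exists_mem_Lk S hS x
  rw [← hstab n]
  exact Lk_mono S (Nat.le_add_left n k) hn

/-- The dimension of `Lk F S k` increases by at least one at each step until it is `dim A`. -/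
lemma min_finrank_le_finrank_Lk [FiniteDimensional F A] (S : Set A)
    (hS : Algebra.adjoin F S = ⊤) (k j : ℕ) :
    min (Module.finrank F A) (Module.finrank F (Lk F S k) + j)
      ≤ Module.finrank F (Lk F S (k + j)) := by
  induction j with
  | zero => simp
  | succ j ih =>
    have hle : Lk F S (k + j) ≤ Lk F S (k + j + 1) := Lk_mono S (Nat.le_succ _)
    rw [← add_assoc k j 1]
    rcases hle.eq_or_lt with h | h
    · have htop := Lk_eq_top_of_eq_succ S hS _ h
      rw [← h, htop, finrank_top]
      exact min_le_left _ _
    · have := Submodule.finrank_lt_finrank_of_lt h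
      omega

lemma Lk_eq_top_of_finrank_le [FiniteDimensional F A] (S : Set A)
    (hS : Algebra.adjoin F S = ⊤) (k j : ℕ)
    (h : Module.finrank F A ≤ Module.finrank F (Lk F S k) + j) : Lk F S (k + j) = ⊤ := by
  have h1 := min_finrank_le_finrank_Lk S hS k j
  rw [min_eq_left h] at h1
  exact Submodule.eq_top_of_finrank_eq (le_antisymm (Submodule.finrank_le _) h1)

/-- The infimum defining `lenS` is attained: for a generating set some `Lk F S k` is `⊤`,
so the infimum is not over the empty set. -/
lemma Lk_lenS [FiniteDimensional F A] (S : Set A) (hS : Algebra.adjoin F S = ⊤) :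
    Lk F S (lenS F S) = ⊤ :=
  Nat.sInf_mem (s := {k | Lk F S k = ⊤})
    ⟨0 + Module.finrank F A, Lk_eq_top_of_finrank_le S hS 0 _ (Nat.le_add_left _ _)⟩

lemma map_Lk (φ : A →ₐ[F] B) (S : Set A) (k : ℕ) :
    (Lk F S k).map φ.toLinearMap = Lk F (φ '' S) k := by
  rw [Lk, Lk, Submodule.map_pow, Submodule.map_span, Set.image_union]
  simp

end Length

theorem stmt_11 (F A B : Type*) [Field F] [Ring A] [Algebra F A] [Ring B] [Algebra F B]
    [FiniteDimensional F A] [FiniteDimensional F B]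
    (φ : A →ₐ[F] B) (hφ : Function.Surjective φ) (L : ℕ)
    (hB : ∀ T : Set B, Algebra.adjoin F T = ⊤ → lenS F T ≤ L) :
    ∀ S : Set A, Algebra.adjoin F S = ⊤ →
      lenS F S ≤ L + Module.finrank F A - Module.finrank F B := by
  intro S hS
  have hT : Algebra.adjoin F (φ '' S) = ⊤ := by
    rw [← AlgHom.map_adjoin, hS, Algebra.map_top]
    exact (AlgHom.range_eq_top φ).2 hφ
  have htop : (Lk F S L).map φ.toLinearMap = ⊤ := by
    rw [map_Lk, eq_top_iff, ← Lk_lenS _ hT]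
    exact Lk_mono _ (hB _ hT)
  have hdim : Module.finrank F B ≤ Module.finrank F (Lk F S L) := by
    have := Submodule.finrank_map_le φ.toLinearMap (Lk F S L)
    rwa [htop, finrank_top] at this
  have hBA : Module.finrank F B ≤ Module.finrank F A :=
    hdim.trans (Submodule.finrank_le _)
  rw [Nat.add_sub_assoc hBA]
  exact Nat.sInf_le (Lk_eq_top_of_finrank_le S hS L _ (by omega))
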